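/- If A and B are locally indicable groups, then the free product A ∗ B is locally indicable. -/

import Mathlib

/-- A group `G` is locally indicable if every non-trivial finitely generated
subgroup of `G` admits a surjective homomorphism onto `ℤ`. -/
def LocallyIndicable (G : Type*) [Group G] : Prop :=
  ∀ H : Subgroup G, H.FG → H ≠ ⊥ → ∃ f : H →* Multiplicative ℤ, Function.Surjective f

/-!
`A ∗ B` embeds into `F ⋊ (A × B)`, where `F` is the free group on the set `A × B`, permuted by left
translation: send `b` to `b` and `a` to its conjugate by the generator indexed by `1`. A
set-theoretic left inverse sends the generator indexed by `(a, b)` to the commutator `⁅a, b⁆` and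
`(a, b) ∈ A × B` to the product `a * b`; that it commutes with right multiplication by `c ∈ A` is
the identity `⁅a, b⁆ * ⁅a * c, b⁆⁻¹ * (a * c * b) = a * b * c`. Free groups are locally indicable by
the Nielsen–Schreier theorem, and local indicability passes to extensions and subgroups.
-/

open Function
open scoped Monoid.Coprod commutatorElement

theorem exists_surjective_int_of_isFreeGroup (F : Type*) [Group F] [IsFreeGroup F] [Nontrivial F] :
    ∃ f : F →* Multiplicative ℤ, Surjective f := by
  have : Nonempty (IsFreeGroup.Generators F) := by
    by_contra! h
    exact not_subsingleton F (IsFreeGroup.toFreeGroup F).toEquiv.subsingleton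
  obtain ⟨i⟩ := this
  refine ⟨IsFreeGroup.lift fun _ ↦ .ofAdd 1, fun n ↦ ⟨IsFreeGroup.of i ^ n.toAdd, ?_⟩⟩
  rw [map_zpow, IsFreeGroup.lift_of, ← ofAdd_zsmul, smul_eq_mul, mul_one, ofAdd_toAdd]

namespace LocallyIndicable

variable {G K N Q : Type*} [Group G] [Group K] [Group N] [Group Q]

theorem exists_surjective_of_ne_one [Group.FG G] (hK : LocallyIndicable K) {f : G →* K}
    (hf : f ≠ 1) : ∃ g : G →* Multiplicative ℤ, Surjective g := by
  obtain ⟨g, hg⟩ := hK f.range ((Group.fg_iff_subgroup_fg _).1 inferInstance)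
    (mt MonoidHom.range_eq_bot_iff.1 hf)
  exact ⟨g.comp f.rangeRestrict, hg.comp f.rangeRestrict_surjective⟩

theorem exists_surjective_of_injective [Group.FG G] [Nontrivial G] (hK : LocallyIndicable K)
    {f : G →* K} (hf : Injective f) : ∃ g : G →* Multiplicative ℤ, Surjective g := by
  refine hK.exists_surjective_of_ne_one (f := f) ?_
  rintro rfl
  exact not_subsingleton G ⟨fun _ _ ↦ hf rfl⟩

theorem of_injective (hK : LocallyIndicable K) {f : G →* K} (hf : Injective f) :
    LocallyIndicable G := by
  intro H hfg hne
  have : Group.FG H := (Group.fg_iff_subgroup_fg H).2 hfg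
  have : Nontrivial H := H.nontrivial_iff_ne_bot.2 hne
  exact hK.exists_surjective_of_injective (f := f.comp H.subtype) (hf.comp H.subtype_injective)

theorem of_ker {f : G →* Q} (hker : LocallyIndicable f.ker) (hQ : LocallyIndicable Q) :
    LocallyIndicable G := by
  intro H hfg hne
  have : Group.FG H := (Group.fg_iff_subgroup_fg H).2 hfg
  have : Nontrivial H := H.nontrivial_iff_ne_bot.2 hne
  by_cases hf : f.comp H.subtype = 1
  · have hle : H ≤ f.ker := fun x hx ↦ MonoidHom.mem_ker.2 (DFunLike.congr_fun hf ⟨x, hx⟩)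
    exact hker.exists_surjective_of_injective (Subgroup.inclusion_injective hle)
  · exact hQ.exists_surjective_of_ne_one hf

theorem semidirectProduct (hN : LocallyIndicable N) (hQ : LocallyIndicable Q)
    {φ : Q →* MulAut N} : LocallyIndicable (N ⋊[φ] Q) := by
  refine of_ker (f := SemidirectProduct.rightHom) ?_ hQ
  rw [← SemidirectProduct.range_inl_eq_ker_rightHom]
  exact hN.of_injective
    (f := (MonoidHom.ofInjective SemidirectProduct.inl_injective).symm.toMonoidHom)
    (MulEquiv.injective _)

theorem prod (hN : LocallyIndicable N) (hQ : LocallyIndicable Q) : LocallyIndicable (N × Q) :=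
  (hN.semidirectProduct hQ).of_injective (f := SemidirectProduct.mulEquivProd.symm.toMonoidHom)
    (MulEquiv.injective _)

theorem of_isFreeGroup [IsFreeGroup G] : LocallyIndicable G := by
  intro H _ hne
  have : Nontrivial H := H.nontrivial_iff_ne_bot.2 hne
  exact exists_surjective_int_of_isFreeGroup H

end LocallyIndicable

/-- The action of `G` on the free group on a `G`-set `X` by permuting the generators. -/
def freeGroupPerm (G X : Type*) [Group G] [MulAction G X] : G →* MulAut (FreeGroup X) where
  toFun g := FreeGroup.freeGroupCongr (MulAction.toPermHom G X g)
  map_one' := by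
    rw [map_one]
    exact FreeGroup.freeGroupCongr_refl
  map_mul' g h := by
    rw [map_mul]
    exact (FreeGroup.freeGroupCongr_trans _ _).symm

@[simp]
theorem freeGroupPerm_of {G X : Type*} [Group G] [MulAction G X] (g : G) (x : X) :
    freeGroupPerm G X g (.of x) = .of (g • x) := by
  simp [freeGroupPerm]

theorem commutator_mul_commutator_inv_mul {G : Type*} [Group G] (a b c : G) :
    ⁅a, b⁆ * (⁅a * c, b⁆⁻¹ * (a * c * b)) = a * b * c := by
  simp only [commutatorElement_def]
  group

section Coprod

variable {A B : Type*} [Group A] [Group B]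

/-- The embedding of `A ∗ B` into `F ⋊ (A × B)`, where `F` is free on the set `A × B`: it is the
standard inclusion on `B`, and the standard inclusion conjugated by the generator at `1` on `A`. -/
def coprodToSemidirect :
    A ∗ B →* FreeGroup (A × B) ⋊[freeGroupPerm (A × B) (A × B)] (A × B) :=
  Monoid.Coprod.lift
    ((MulAut.conj (.inl (.of 1))).toMonoidHom.comp (SemidirectProduct.inr.comp (.inl A B)))
    (SemidirectProduct.inr.comp (.inr A B))

theorem coprodToSemidirect_inl (a : A) :
    coprodToSemidirect (.inl a : A ∗ B) = ⟨.of 1 * (.of (a, 1))⁻¹, (a, 1)⟩ := by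
  ext1 <;> simp [coprodToSemidirect]

theorem coprodToSemidirect_inr (b : B) :
    coprodToSemidirect (.inr b : A ∗ B) = ⟨1, (1, b)⟩ := by
  simp only [coprodToSemidirect, Monoid.Coprod.lift_apply_inr]
  rfl

/-- The left inverse of `coprodToSemidirect` sending `(f, (a, b))` to `θ f * (a * b)`, where the
homomorphism `θ` maps the generator at `(x, y)` to `⁅x, y⁆`. It is only a map of sets, since
`(a, b) ↦ a * b` is not multiplicative. -/
def semidirectToCoprod (x : FreeGroup (A × B) ⋊[freeGroupPerm (A × B) (A × B)] (A × B)) :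
    A ∗ B :=
  FreeGroup.lift (fun p : A × B ↦ ⁅(.inl p.1 : A ∗ B), .inr p.2⁆) x.left *
    (.inl x.right.1 * .inr x.right.2)

theorem semidirectToCoprod_mul_coprodToSemidirect
    (x : FreeGroup (A × B) ⋊[freeGroupPerm (A × B) (A × B)] (A × B)) (w : A ∗ B) :
    semidirectToCoprod (x * coprodToSemidirect w) = semidirectToCoprod x * w := by
  induction w using Monoid.Coprod.induction_on generalizing x with
  | inl a =>
    have identity :=
      commutator_mul_commutator_inv_mul (.inl x.right.1 : A ∗ B) (.inr x.right.2) (.inl a)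
    simpa [semidirectToCoprod, coprodToSemidirect_inl, mul_assoc] using identity
  | inr b => simp [semidirectToCoprod, coprodToSemidirect_inr, mul_assoc]
  | mul v w hv hw => rw [map_mul, ← mul_assoc, hw, hv, mul_assoc]

theorem coprodToSemidirect_injective : Injective (coprodToSemidirect (A := A) (B := B)) := by
  refine LeftInverse.injective (g := semidirectToCoprod) fun w ↦ ?_
  simpa [semidirectToCoprod] using semidirectToCoprod_mul_coprodToSemidirect 1 w

end Coprod

/-- The free product of two locally indicable groups is locally indicable. -/
theorem stmt_6 {A B : Type*} [Group A] [Group B]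
    (hA : LocallyIndicable A) (hB : LocallyIndicable B) :
    LocallyIndicable (Monoid.Coprod A B) :=
  (LocallyIndicable.of_isFreeGroup.semidirectProduct (hA.prod hB)).of_injective
    coprodToSemidirect_injective
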